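/- arXiv:2202.06195 — 2 statements merged into one kernel-verified Lean document; each statement's English description precedes it below -/
import Mathlib

section
/- For every integer d ≥ 1 and every real y with 0 < y < π/2, the iterated sum over integers n₁ ≥ n₂ ≥ ⋯ ≥ n_d ≥ 0 of (4^{n₁} (sin y)^{2 n₁} / binom(2n₁, n₁)) / ((2n₁+1)²(2n₂+1)²⋯(2n_d+1)²) equals (2 / sin y) times the imaginary part of ∑_{n=1}^∞ (i · tan(y/2))^n / n^{2d}. -/
open Real Complex

/-!
Write `a n = 4 ^ n / binom(2n, n)` and let `T d n` be the part of the nested sum of the weights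
`1 / (2m + 1) ^ 2` in which `n₁ = n`, so that the left-hand side is `F d (sin y) / sin y` with
`F d x = ∑ a n * T d n * x ^ (2n + 1)`. Let `θ = x d/dx`. Since `(2n + 1) a (n + 1) = (2n + 2) a n`
and `(2n + 1) ^ 2 * T (d + 1) n = ∑ m ≤ n, T d m`, comparing coefficients gives
`(1 - x ^ 2) θ² F (d + 1) - x ^ 2 θ F (d + 1) = F d`; under `x = sin y` the operator on the left is
the square of `D = sin y d/dy`. On the other side `Im Li_s (i t)` is the inverse tangent integral
`Ti_s t = ∑ (-1) ^ n t ^ (2n + 1) / (2n + 1) ^ s`, and `θ Ti_(s + 1) = Ti_s` becomes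
`D Ti_(s + 1) = Ti_s` under `t = tan (y / 2)`. Hence `F d (sin y)` and `2 Ti_(2d) (tan (y / 2))`
satisfy the same recursion in `d` and vanish at `y = 0`; for `d = 0` both are equal to `sin y`.
-/

open Filter Asymptotics Set
open scoped NNReal ENNReal

section NestedSums

/-- The nested sum `∑ w n₁ * ⋯ * w n_d` over `n = n₁ ≥ n₂ ≥ ⋯ ≥ n_d ≥ 0` with prescribed largest
index `n`. The empty tuple is regarded as having largest index `0`. -/
def nestedSum {R : Type*} [Semiring R] (w : ℕ → R) : ℕ → ℕ → R
  | 0 => Pi.single 0 1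
  | d + 1 => fun n => w n * ∑ m ∈ Finset.range (n + 1), nestedSum w d m

lemma map_nestedSum {R S : Type*} [Semiring R] [Semiring S] (f : R →+* S) (w : ℕ → R) (d n : ℕ) :
    f (nestedSum w d n) = nestedSum (fun k => f (w k)) d n := by
  induction d generalizing n with
  | zero => simp only [nestedSum, Pi.single_apply, apply_ite f, map_one, map_zero]
  | succ d ih => simp only [nestedSum, map_mul, map_sum, ih]

section Ordered

variable {R : Type*} [Semiring R] [PartialOrder R] [IsOrderedRing R] {w : ℕ → R}

lemma nestedSum_nonneg (hw : ∀ n, 0 ≤ w n) (d n : ℕ) : 0 ≤ nestedSum w d n := by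
  induction d generalizing n with
  | zero => simp only [nestedSum, Pi.single_apply]; split_ifs <;> simp
  | succ d ih => exact mul_nonneg (hw n) (Finset.sum_nonneg fun m _ => ih m)

lemma nestedSum_le_one (hw : ∀ n, 0 ≤ w n) (hw' : ∀ n, w n * (n + 1) ≤ 1) (d n : ℕ) :
    nestedSum w d n ≤ 1 := by
  induction d generalizing n with
  | zero => simp only [nestedSum, Pi.single_apply]; split_ifs <;> simp
  | succ d ih =>
    calc w n * ∑ m ∈ Finset.range (n + 1), nestedSum w d m
        ≤ w n * ∑ _m ∈ Finset.range (n + 1), 1 :=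
          mul_le_mul_of_nonneg_left (Finset.sum_le_sum fun m _ => ih m) (hw n)
      _ = w n * (n + 1) := by simp
      _ ≤ 1 := hw' n

end Ordered

lemma antitone_cons_iff {α : Type*} [Preorder α] {d : ℕ} {k : α} {f : Fin (d + 1) → α} :
    Antitone (Fin.cons k f : Fin (d + 2) → α) ↔ f 0 ≤ k ∧ Antitone f := by
  simp [Fin.antitone_iff_succ_le, Fin.forall_fin_succ (n := d)]

open Classical in
lemma tsum_ite_antitone_eq_tsum_nestedSum (d : ℕ) (g w : ℕ → ℝ≥0∞) :
    ∑' n : Fin (d + 1) → ℕ, (if Antitone n then g (n 0) * ∏ j, w (n j) else 0) =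
      ∑' k, g k * nestedSum w (d + 1) k := by
  induction d generalizing g with
  | zero =>
    rw [← (Equiv.funUnique (Fin 1) ℕ).symm.tsum_eq]
    refine tsum_congr fun k => ?_
    rw [if_pos (Subsingleton.antitone (α := Fin 1) _)]
    simp [nestedSum]
  | succ d ih =>
    rw [← (Fin.consEquiv fun _ : Fin (d + 2) => ℕ).tsum_eq, ENNReal.tsum_prod']
    refine tsum_congr fun k => ?_
    calc ∑' f : Fin (d + 1) → ℕ, (if Antitone (Fin.cons k f : Fin (d + 2) → ℕ) then
            g k * ∏ j, w ((Fin.cons k f : Fin (d + 2) → ℕ) j) else 0)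
        = ∑' f : Fin (d + 1) → ℕ, g k * w k *
            (if Antitone f then (if f 0 ≤ k then 1 else 0) * ∏ j, w (f j) else 0) := by
          refine tsum_congr fun f => ?_
          simp only [antitone_cons_iff, Fin.prod_univ_succ (n := d + 1), Fin.cons_zero,
            Fin.cons_succ]
          by_cases h : f 0 ≤ k <;> by_cases hf : Antitone f <;> simp [h, hf, mul_assoc]
      _ = g k * w k * ∑' m, (if m ≤ k then 1 else 0) * nestedSum w (d + 1) m := by
          rw [ENNReal.tsum_mul_left, ih fun m => if m ≤ k then 1 else 0]
      _ = g k * w k * ∑ m ∈ Finset.range (k + 1), nestedSum w (d + 1) m := by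
          congr 1
          rw [tsum_eq_sum (s := Finset.range (k + 1)) fun m hm => by simp_all]
          exact Finset.sum_congr rfl fun m hm => by simp_all
      _ = g k * nestedSum w (d + 2) k := mul_assoc ..

lemma tsum_antitone_eq_tsum_nestedSum_nnreal (d : ℕ) (g w : ℕ → ℝ≥0) :
    ∑' n : {n : Fin (d + 1) → ℕ // Antitone n}, g (n.1 0) * ∏ j, w (n.1 j) =
      ∑' k, g k * nestedSum w (d + 1) k := by
  classical
  have coe_nestedSum (k : ℕ) :
      ((nestedSum w (d + 1) k : ℝ≥0) : ℝ≥0∞) = nestedSum (fun i => (w i : ℝ≥0∞)) (d + 1) k :=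
    map_nestedSum ENNReal.ofNNRealHom w (d + 1) k
  rw [NNReal.tsum_eq_toNNReal_tsum, NNReal.tsum_eq_toNNReal_tsum]
  push_cast [coe_nestedSum]
  rw [← tsum_ite_antitone_eq_tsum_nestedSum]
  refine congrArg _ ((tsum_subtype {n : Fin (d + 1) → ℕ | Antitone n} fun n =>
    (g (n 0) : ℝ≥0∞) * ∏ j, (w (n j) : ℝ≥0∞)).trans (tsum_congr fun n => ?_))
  simp only [indicator_apply, mem_ofPred_eq]

lemma tsum_antitone_eq_tsum_nestedSum (d : ℕ) {g w : ℕ → ℝ} (hg : ∀ n, 0 ≤ g n)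
    (hw : ∀ n, 0 ≤ w n) :
    ∑' n : {n : Fin (d + 1) → ℕ // Antitone n}, g (n.1 0) * ∏ j, w (n.1 j) =
      ∑' k, g k * nestedSum w (d + 1) k := by
  lift g to ℕ → ℝ≥0 using hg
  lift w to ℕ → ℝ≥0 using hw
  have coe_nestedSum (k : ℕ) :
      ((nestedSum w (d + 1) k : ℝ≥0) : ℝ) = nestedSum (fun i => (w i : ℝ)) (d + 1) k :=
    map_nestedSum NNReal.toRealHom w (d + 1) k
  have h := tsum_antitone_eq_tsum_nestedSum_nnreal d g w
  rw [← NNReal.coe_inj] at h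
  push_cast [coe_nestedSum] at h
  exact h

end NestedSums

section OddPowerSeries

/-- The power series `∑ b n * x ^ (2 n + 1)`, an odd function of `x`. -/
noncomputable def oddPowerSeries (b : ℕ → ℝ) (x : ℝ) : ℝ := ∑' n, b n * x ^ (2 * n + 1)

/-- The coefficients of `x d/dx` applied to `oddPowerSeries b`. -/
def eulerCoeff (b : ℕ → ℝ) (n : ℕ) : ℝ := (2 * n + 1) * b n

/-- A sequence of at most polynomial growth; its odd power series converges on `(-1, 1)`, and may
be differentiated there any number of times. -/
def HasPolynomialGrowth (b : ℕ → ℝ) : Prop := ∃ m : ℕ, b =O[atTop] fun n => (n : ℝ) ^ m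

namespace HasPolynomialGrowth

variable {b c : ℕ → ℝ}

lemma of_abs_le_one (h : ∀ n, |b n| ≤ 1) : HasPolynomialGrowth b :=
  ⟨0, .of_bound 1 <| .of_forall fun n => by simpa using h n⟩

protected lemma mul (hb : HasPolynomialGrowth b) (hc : HasPolynomialGrowth c) :
    HasPolynomialGrowth fun n => b n * c n := by
  obtain ⟨m, hm⟩ := hb
  obtain ⟨k, hk⟩ := hc
  exact ⟨m + k, by simpa only [pow_add] using hm.mul hk⟩

protected lemma eulerCoeff (hb : HasPolynomialGrowth b) : HasPolynomialGrowth (eulerCoeff b) := by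
  refine HasPolynomialGrowth.mul ⟨1, .of_bound 3 ?_⟩ hb
  filter_upwards [eventually_ge_atTop 1] with n hn
  have hn' : (1 : ℝ) ≤ n := by exact_mod_cast hn
  rw [pow_one, Real.norm_of_nonneg (by positivity), Real.norm_of_nonneg (by positivity)]
  linarith

lemma summable_mul_pow (hb : HasPolynomialGrowth b) {r : ℝ} (hr : |r| < 1) :
    Summable fun n => b n * r ^ n := by
  obtain ⟨m, hm⟩ := hb
  exact summable_of_isBigO_nat (summable_pow_mul_geometric_of_norm_lt_one m hr)
    (hm.mul (isBigO_refl _ _))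

lemma summable_mul_pow_odd (hb : HasPolynomialGrowth b) {x : ℝ} (hx : |x| < 1) :
    Summable fun n => b n * x ^ (2 * n + 1) := by
  have hx2 : |x ^ 2| < 1 := by rwa [abs_pow, sq_lt_one_iff_abs_lt_one, abs_abs]
  refine ((hb.summable_mul_pow hx2).mul_right x).congr fun n => ?_
  ring

lemma hasDerivAt_oddPowerSeries (hb : HasPolynomialGrowth b) {x : ℝ} (hx : |x| < 1) :
    HasDerivAt (oddPowerSeries b) (∑' n, eulerCoeff b n * x ^ (2 * n)) x := by
  obtain ⟨r, hxr, hr⟩ := exists_between hx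
  have hr0 : 0 ≤ r := (abs_nonneg x).trans hxr.le
  have hr2 : |r ^ 2| < 1 := by rwa [abs_pow, sq_lt_one_iff_abs_lt_one, abs_abs, abs_of_nonneg hr0]
  refine hasDerivAt_tsum_of_isPreconnected (t := Metric.ball 0 r)
    (g := fun n z => b n * z ^ (2 * n + 1)) (g' := fun n z => eulerCoeff b n * z ^ (2 * n))
    (hb.eulerCoeff.summable_mul_pow hr2).norm Metric.isOpen_ball (convex_ball _ _).isPreconnected
    (fun n z _ => ?_) (fun n z hz => ?_) (y₀ := x) (by simpa using hxr)
    (hb.summable_mul_pow_odd hx) (by simpa using hxr)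
  · refine ((hasDerivAt_pow (2 * n + 1) z).const_mul (b n)).congr_deriv ?_
    simp only [eulerCoeff, Nat.add_sub_cancel]
    push_cast
    ring
  · have hz' : |z| ≤ r := by simpa using (Metric.mem_ball.1 hz).le
    rw [norm_mul, norm_mul, norm_pow, norm_pow, norm_pow, ← pow_mul, Real.norm_of_nonneg hr0,
      Real.norm_eq_abs z]
    gcongr

lemma continuousOn_oddPowerSeries (hb : HasPolynomialGrowth b) :
    ContinuousOn (oddPowerSeries b) {x | |x| < 1} :=
  fun _ hx => (hb.hasDerivAt_oddPowerSeries hx).continuousAt.continuousWithinAt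

lemma hasDerivAt_oddPowerSeries_comp (hb : HasPolynomialGrowth b) {u : ℝ → ℝ} {u' y : ℝ}
    (hu : HasDerivAt u u' y) (hlt : |u y| < 1) (hne : u y ≠ 0) :
    HasDerivAt (fun z => oddPowerSeries b (u z))
      (oddPowerSeries (eulerCoeff b) (u y) * (u' / u y)) y := by
  have hEuler : oddPowerSeries (eulerCoeff b) (u y) =
      (∑' n, eulerCoeff b n * u y ^ (2 * n)) * u y := by
    simp only [oddPowerSeries, pow_succ, ← mul_assoc, tsum_mul_right]
  refine ((hb.hasDerivAt_oddPowerSeries hlt).comp y hu).congr_deriv ?_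
  rw [hEuler]
  field_simp

end HasPolynomialGrowth

@[simp]
lemma oddPowerSeries_zero (b : ℕ → ℝ) : oddPowerSeries b 0 = 0 := by simp [oddPowerSeries]

lemma oddPowerSeries_single_zero_one (x : ℝ) : oddPowerSeries (Pi.single 0 1) x = x := by
  rw [oddPowerSeries, tsum_eq_single 0 fun n hn => by simp [hn]]
  simp

lemma oddPowerSeries_eq_add_sq_mul {b c e f : ℕ → ℝ} (hb : HasPolynomialGrowth b)
    (he : HasPolynomialGrowth e) (hf : HasPolynomialGrowth f) (h0 : b 0 = c 0)
    (hsucc : ∀ n, b (n + 1) = c (n + 1) + (e n + f n)) {x : ℝ} (hx : |x| < 1) :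
    oddPowerSeries b x =
      oddPowerSeries c x + x ^ 2 * (oddPowerSeries e x + oddPowerSeries f x) := by
  have hbx := hb.summable_mul_pow_odd hx
  have hbx' := (summable_nat_add_iff 1).2 hbx
  have hefx := ((he.summable_mul_pow_odd hx).add (hf.summable_mul_pow_odd hx)).mul_left (x ^ 2)
  have hterm (n : ℕ) : c (n + 1) * x ^ (2 * (n + 1) + 1) = b (n + 1) * x ^ (2 * (n + 1) + 1) -
      x ^ 2 * (e n * x ^ (2 * n + 1) + f n * x ^ (2 * n + 1)) := by
    rw [hsucc]
    ring
  have hcx : Summable fun n => c n * x ^ (2 * n + 1) :=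
    (summable_nat_add_iff 1).1 ((hbx'.sub hefx).congr fun n => (hterm n).symm)
  simp only [oddPowerSeries]
  rw [hbx.tsum_eq_zero_add, hcx.tsum_eq_zero_add, tsum_congr hterm, hbx'.tsum_sub hefx,
    tsum_mul_left, (he.summable_mul_pow_odd hx).tsum_add (hf.summable_mul_pow_odd hx), h0]
  ring

end OddPowerSeries

section InverseTangentIntegral

/-- The coefficients of the inverse tangent integral
`Ti_s t = ∑ (-1) ^ n t ^ (2n + 1) / (2n + 1) ^ s`, which is `oddPowerSeries (invTanCoeff s) t`. -/
noncomputable def invTanCoeff (s n : ℕ) : ℝ := (-1) ^ n / (2 * n + 1) ^ s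

lemma hasPolynomialGrowth_invTanCoeff (s : ℕ) : HasPolynomialGrowth (invTanCoeff s) := by
  refine .of_abs_le_one fun n => ?_
  have h1 : (1 : ℝ) ≤ 2 * n + 1 := by linarith [n.cast_nonneg (α := ℝ)]
  rw [invTanCoeff, abs_div, abs_neg_one_pow, abs_of_nonneg (by positivity)]
  exact div_le_one_of_le₀ (one_le_pow₀ h1) (by positivity)

lemma eulerCoeff_invTanCoeff (s : ℕ) : eulerCoeff (invTanCoeff (s + 1)) = invTanCoeff s := by
  ext n
  rw [eulerCoeff, invTanCoeff, invTanCoeff, pow_succ]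
  field_simp

lemma oddPowerSeries_invTanCoeff_zero {t : ℝ} (ht : |t| < 1) :
    oddPowerSeries (invTanCoeff 0) t = t / (1 + t ^ 2) := by
  have ht2 : |-t ^ 2| < 1 := by rwa [abs_neg, abs_pow, sq_lt_one_iff_abs_lt_one, abs_abs]
  calc oddPowerSeries (invTanCoeff 0) t = ∑' n : ℕ, t * (-t ^ 2) ^ n :=
        tsum_congr fun n => by rw [invTanCoeff, neg_pow (t ^ 2)]; ring
    _ = t / (1 + t ^ 2) := by
        rw [tsum_mul_left, tsum_geometric_of_abs_lt_one ht2, sub_neg_eq_add, div_eq_mul_inv]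

lemma im_I_mul_pow_div (t : ℝ) (s k : ℕ) :
    ((I * t) ^ (k + 1) / ((k : ℂ) + 1) ^ s).im = t ^ (k + 1) / (k + 1) ^ s * (I ^ (k + 1)).im := by
  rw [← im_ofReal_mul]
  push_cast
  ring_nf

lemma summable_I_mul_pow_div {t : ℝ} (ht : |t| < 1) (s : ℕ) :
    Summable fun k : ℕ => (I * t) ^ (k + 1) / ((k : ℂ) + 1) ^ s := by
  refine .of_norm_bounded
    ((summable_nat_add_iff 1).2 (summable_geometric_of_lt_one (abs_nonneg t) ht)) fun k => ?_
  have h1 : (1 : ℝ) ≤ ‖(k : ℂ) + 1‖ := by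
    rw [← Nat.cast_succ, Complex.norm_natCast]
    simp
  rw [norm_div, norm_pow, norm_pow, norm_mul, norm_I, one_mul, norm_real, Real.norm_eq_abs]
  exact div_le_self (by positivity) (one_le_pow₀ h1)

lemma im_tsum_I_mul_pow_div {t : ℝ} (ht : |t| < 1) (s : ℕ) :
    (∑' k : ℕ, (I * t) ^ (k + 1) / ((k : ℂ) + 1) ^ s).im = oddPowerSeries (invTanCoeff s) t := by
  rw [Complex.im_tsum (summable_I_mul_pow_div ht s), oddPowerSeries]
  simp only [im_I_mul_pow_div]
  rw [← (mul_right_injective₀ (two_ne_zero (α := ℕ))).tsum_eq]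
  · refine tsum_congr fun n => ?_
    have hI : I ^ (2 * n + 1) = ((-1 : ℝ) ^ n : ℝ) * I := by
      rw [pow_succ, pow_mul, I_sq]; push_cast; rfl
    rw [hI, im_ofReal_mul, I_im, invTanCoeff]
    push_cast
    ring
  · refine Function.support_subset_iff'.2 fun k hk => ?_
    obtain ⟨m, rfl | rfl⟩ := k.even_or_odd'
    · exact absurd ⟨m, rfl⟩ hk
    · have hI : I ^ (2 * m + 1 + 1) = ((-1 : ℝ) ^ (m + 1) : ℝ) := by
        rw [show 2 * m + 1 + 1 = 2 * (m + 1) by ring, pow_mul, I_sq]; push_cast; rfl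
      rw [hI, ofReal_im, mul_zero]

end InverseTangentIntegral

section CentralCoeff

/-- The weight `1 / (2n + 1) ^ 2` of the iterated sum. -/
noncomputable def oddSqWeight (n : ℕ) : ℝ := ((2 * n + 1) ^ 2)⁻¹

/-- The factor `4 ^ n / binom(2n, n)` of the iterated sum, attached to its largest index. -/
noncomputable def invCentralBinom (n : ℕ) : ℝ := 4 ^ n / n.centralBinom

/-- The coefficients of the odd power series whose value at `sin y` is `sin y` times the iterated
sum of depth `d`. -/
noncomputable def centralCoeff (d n : ℕ) : ℝ := invCentralBinom n * nestedSum oddSqWeight d n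

lemma oddSqWeight_nonneg (n : ℕ) : 0 ≤ oddSqWeight n := by
  unfold oddSqWeight
  positivity

lemma oddSqWeight_mul_le_one (n : ℕ) : oddSqWeight n * (n + 1) ≤ 1 := by
  rw [oddSqWeight, inv_mul_le_one₀ (by positivity)]
  nlinarith [n.cast_nonneg (α := ℝ)]

lemma sq_mul_nestedSum_oddSqWeight (d n : ℕ) :
    (2 * n + 1 : ℝ) ^ 2 * nestedSum oddSqWeight (d + 1) n =
      ∑ m ∈ Finset.range (n + 1), nestedSum oddSqWeight d m :=
  mul_inv_cancel_left₀ (by positivity) _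

lemma invCentralBinom_succ (n : ℕ) :
    (2 * n + 1) * invCentralBinom (n + 1) = (2 * n + 2) * invCentralBinom n := by
  have hn : (n.centralBinom : ℝ) ≠ 0 := by exact_mod_cast n.centralBinom_ne_zero
  have hn1 : ((n + 1).centralBinom : ℝ) ≠ 0 := by exact_mod_cast (n + 1).centralBinom_ne_zero
  have h : ((n : ℝ) + 1) * (n + 1).centralBinom = 2 * (2 * n + 1) * n.centralBinom := by
    exact_mod_cast n.succ_mul_centralBinom_succ
  rw [invCentralBinom, invCentralBinom, pow_succ]
  field_simp
  linear_combination (-2) * h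

lemma hasPolynomialGrowth_invCentralBinom : HasPolynomialGrowth invCentralBinom := by
  refine ⟨1, .of_bound 2 ?_⟩
  filter_upwards [eventually_ge_atTop 1] with n hn
  have hpos : (0 : ℝ) < n.centralBinom := by exact_mod_cast n.centralBinom_pos
  have h : (4 : ℝ) ^ n ≤ 2 * n * n.centralBinom := by
    exact_mod_cast n.four_pow_le_two_mul_self_mul_centralBinom hn
  rw [invCentralBinom, pow_one, Real.norm_of_nonneg (by positivity),
    Real.norm_of_nonneg n.cast_nonneg]
  exact (div_le_iff₀ hpos).2 h

lemma hasPolynomialGrowth_centralCoeff (d : ℕ) : HasPolynomialGrowth (centralCoeff d) := by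
  refine hasPolynomialGrowth_invCentralBinom.mul (.of_abs_le_one fun n => ?_)
  rw [abs_of_nonneg (nestedSum_nonneg oddSqWeight_nonneg d n)]
  exact nestedSum_le_one oddSqWeight_nonneg oddSqWeight_mul_le_one d n

lemma centralCoeff_zero : centralCoeff 0 = Pi.single 0 1 := by
  ext n
  rcases eq_or_ne n 0 with rfl | hn
  · simp [centralCoeff, nestedSum, invCentralBinom]
  · simp [centralCoeff, nestedSum, hn]

lemma eulerCoeff_eulerCoeff_centralCoeff_succ (d n : ℕ) :
    eulerCoeff (eulerCoeff (centralCoeff (d + 1))) (n + 1) = centralCoeff d (n + 1) +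
      (eulerCoeff (eulerCoeff (centralCoeff (d + 1))) n + eulerCoeff (centralCoeff (d + 1)) n) := by
  have hT := sq_mul_nestedSum_oddSqWeight d (n + 1)
  rw [Finset.sum_range_succ, ← sq_mul_nestedSum_oddSqWeight d n] at hT
  have ha := invCentralBinom_succ n
  simp only [eulerCoeff, centralCoeff]
  push_cast at hT ⊢
  linear_combination invCentralBinom (n + 1) * hT +
    (2 * n + 1) * nestedSum oddSqWeight (d + 1) n * ha

lemma oddPowerSeries_centralCoeff_eq_sub (d : ℕ) {x : ℝ} (hx : |x| < 1) :
    oddPowerSeries (centralCoeff d) x =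
      (1 - x ^ 2) * oddPowerSeries (eulerCoeff (eulerCoeff (centralCoeff (d + 1)))) x -
        x ^ 2 * oddPowerSeries (eulerCoeff (centralCoeff (d + 1))) x := by
  have hθ := (hasPolynomialGrowth_centralCoeff (d + 1)).eulerCoeff
  have hrec := oddPowerSeries_eq_add_sq_mul hθ.eulerCoeff hθ.eulerCoeff hθ
    (c := centralCoeff d) (by simp [eulerCoeff, centralCoeff, nestedSum, oddSqWeight])
    (eulerCoeff_eulerCoeff_centralCoeff_succ d) hx
  linear_combination -hrec

end CentralCoeff

lemma eqOn_Ico_of_hasDerivAt_eq {f g f' : ℝ → ℝ} {a b : ℝ} (hfg : f a = g a)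
    (hf : ContinuousOn f (Ico a b)) (hg : ContinuousOn g (Ico a b))
    (hf' : ∀ x ∈ Ioo a b, HasDerivAt f (f' x) x) (hg' : ∀ x ∈ Ioo a b, HasDerivAt g (f' x) x) :
    EqOn f g (Ico a b) := by
  intro x hx
  rcases hx.1.eq_or_lt with rfl | hax
  · exact hfg
  have hsub : Ioo a x ⊆ Ioo a b := Ioo_subset_Ioo_right hx.2.le
  obtain ⟨c, -, hc⟩ := exists_hasDerivAt_eq_slope (f - g) (fun _ => 0) hax
    ((hf.sub hg).mono (Icc_subset_Ico_right hx.2)) fun z hz =>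
      ((hf' z (hsub hz)).sub (hg' z (hsub hz))).congr_deriv (sub_self _)
  have hslope := (div_eq_zero_iff.1 hc.symm).resolve_right (sub_pos.2 hax).ne'
  simp only [Pi.sub_apply] at hslope
  linarith

section Substitution

lemma abs_sin_lt_one {y : ℝ} (hy : |y| < π / 2) : |Real.sin y| < 1 := by
  have hcos : 0 < Real.cos y := Real.cos_pos_of_mem_Ioo (abs_lt.1 hy)
  rw [← sq_lt_one_iff_abs_lt_one]
  nlinarith [Real.sin_sq_add_cos_sq y]

lemma abs_tan_half_lt_one {y : ℝ} (hy : |y| < π / 2) : |Real.tan (y / 2)| < 1 := by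
  obtain ⟨hneg, hpos⟩ := abs_lt.1 hy
  rw [abs_lt, ← Real.tan_pi_div_four, ← Real.tan_neg]
  constructor <;> apply Real.tan_lt_tan_of_lt_of_lt_pi_div_two <;> linarith [Real.pi_pos]

lemma hasDerivAt_tan_half {y : ℝ} (hy : Real.sin y ≠ 0) :
    HasDerivAt (fun z => Real.tan (z / 2)) (Real.tan (y / 2) / Real.sin y) y := by
  have hsin : Real.sin y = 2 * Real.sin (y / 2) * Real.cos (y / 2) := by
    rw [← Real.sin_two_mul, mul_div_cancel₀ y two_ne_zero]
  have hs : Real.sin (y / 2) ≠ 0 := fun h => hy (by rw [hsin, h]; ring)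
  have hc : Real.cos (y / 2) ≠ 0 := fun h => hy (by rw [hsin, h]; ring)
  refine ((Real.hasDerivAt_tan hc).comp y ((hasDerivAt_id y).div_const 2)).congr_deriv ?_
  rw [Real.tan_eq_sin_div_cos, hsin]
  field_simp

variable {y : ℝ}

lemma hasDerivAt_oddPowerSeries_tan_half (s : ℕ) (h0 : 0 < y) (h1 : y < π / 2) :
    HasDerivAt (fun z => oddPowerSeries (invTanCoeff (s + 1)) (Real.tan (z / 2)))
      (oddPowerSeries (invTanCoeff s) (Real.tan (y / 2)) / Real.sin y) y := by
  have hsin : 0 < Real.sin y := Real.sin_pos_of_pos_of_lt_pi h0 (by linarith)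
  have htan : 0 < Real.tan (y / 2) :=
    Real.tan_pos_of_pos_of_lt_pi_div_two (by linarith) (by linarith)
  refine ((hasPolynomialGrowth_invTanCoeff (s + 1)).hasDerivAt_oddPowerSeries_comp
    (hasDerivAt_tan_half hsin.ne') (abs_tan_half_lt_one (by rwa [abs_of_pos h0]))
    htan.ne').congr_deriv ?_
  rw [eulerCoeff_invTanCoeff]
  field_simp

lemma hasDerivAt_oddPowerSeries_sin {b : ℕ → ℝ} (hb : HasPolynomialGrowth b) (h0 : 0 < y)
    (h1 : y < π / 2) :
    HasDerivAt (fun z => oddPowerSeries b (Real.sin z))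
      (Real.cos y * oddPowerSeries (eulerCoeff b) (Real.sin y) / Real.sin y) y := by
  have hsin : 0 < Real.sin y := Real.sin_pos_of_pos_of_lt_pi h0 (by linarith)
  refine (hb.hasDerivAt_oddPowerSeries_comp (Real.hasDerivAt_sin y)
    (abs_sin_lt_one (by rwa [abs_of_pos h0])) hsin.ne').congr_deriv ?_
  ring

lemma hasDerivAt_cos_mul_oddPowerSeries_sin (d : ℕ) (h0 : 0 < y) (h1 : y < π / 2) :
    HasDerivAt
      (fun z => Real.cos z * oddPowerSeries (eulerCoeff (centralCoeff (d + 1))) (Real.sin z))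
      (oddPowerSeries (centralCoeff d) (Real.sin y) / Real.sin y) y := by
  have hsin : 0 < Real.sin y := Real.sin_pos_of_pos_of_lt_pi h0 (by linarith)
  refine ((Real.hasDerivAt_cos y).mul (hasDerivAt_oddPowerSeries_sin
    (hasPolynomialGrowth_centralCoeff (d + 1)).eulerCoeff h0 h1)).congr_deriv ?_
  rw [oddPowerSeries_centralCoeff_eq_sub d (abs_sin_lt_one (by rwa [abs_of_pos h0])),
    ← Real.cos_sq']
  field_simp
  ring

lemma continuousOn_oddPowerSeries_sin {b : ℕ → ℝ} (hb : HasPolynomialGrowth b) :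
    ContinuousOn (fun z => oddPowerSeries b (Real.sin z)) {z | |z| < π / 2} :=
  hb.continuousOn_oddPowerSeries.comp Real.continuous_sin.continuousOn fun _ => abs_sin_lt_one

lemma continuousOn_oddPowerSeries_tan_half {b : ℕ → ℝ} (hb : HasPolynomialGrowth b) :
    ContinuousOn (fun z => oddPowerSeries b (Real.tan (z / 2))) {z | |z| < π / 2} := by
  refine hb.continuousOn_oddPowerSeries.comp ?_ fun _ => abs_tan_half_lt_one
  refine Real.continuousOn_tan_Ioo.comp (by fun_prop) fun z hz => ?_
  obtain ⟨hneg, hpos⟩ := abs_lt.1 (show |z| < π / 2 from hz)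
  constructor <;> linarith

theorem eqOn_oddPowerSeries_sin_tan_half (d : ℕ) :
    EqOn (fun y => oddPowerSeries (centralCoeff d) (Real.sin y))
      (fun y => 2 * oddPowerSeries (invTanCoeff (2 * d)) (Real.tan (y / 2))) (Ico 0 (π / 2)) := by
  have hsub : Ico 0 (π / 2) ⊆ {z | |z| < π / 2} := fun z hz =>
    (abs_of_nonneg hz.1).trans_lt hz.2
  have hTi (s : ℕ) : ContinuousOn
      (fun y => 2 * oddPowerSeries (invTanCoeff s) (Real.tan (y / 2))) (Ico 0 (π / 2)) :=
    continuousOn_const.mul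
      ((continuousOn_oddPowerSeries_tan_half (hasPolynomialGrowth_invTanCoeff s)).mono hsub)
  have hTi' (s : ℕ) (y : ℝ) (hy : y ∈ Ioo 0 (π / 2)) : HasDerivAt
      (fun y => 2 * oddPowerSeries (invTanCoeff (s + 1)) (Real.tan (y / 2)))
      (2 * oddPowerSeries (invTanCoeff s) (Real.tan (y / 2)) / Real.sin y) y :=
    ((hasDerivAt_oddPowerSeries_tan_half s hy.1 hy.2).const_mul 2).congr_deriv
      (mul_div_assoc ..).symm
  induction d with
  | zero =>
    intro y hy
    simp only [centralCoeff_zero, oddPowerSeries_single_zero_one,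
      oddPowerSeries_invTanCoeff_zero (abs_tan_half_lt_one (hsub hy))]
    rw [Real.sin_eq_two_mul_tan_half_div_one_add_tan_half_sq, mul_div_assoc]
  | succ d ih =>
    have hF := hasPolynomialGrowth_centralCoeff (d + 1)
    have hθ : EqOn
        (fun y => Real.cos y * oddPowerSeries (eulerCoeff (centralCoeff (d + 1))) (Real.sin y))
        (fun y => 2 * oddPowerSeries (invTanCoeff (2 * d + 1)) (Real.tan (y / 2)))
        (Ico 0 (π / 2)) :=
      eqOn_Ico_of_hasDerivAt_eq (by simp)
        (Real.continuous_cos.continuousOn.mul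
          ((continuousOn_oddPowerSeries_sin hF.eulerCoeff).mono hsub)) (hTi _)
        (fun y hy => hasDerivAt_cos_mul_oddPowerSeries_sin d hy.1 hy.2)
        fun y hy => (hTi' _ y hy).congr_deriv
          (congrArg (· / Real.sin y) (ih (Ioo_subset_Ico_self hy)).symm)
    exact eqOn_Ico_of_hasDerivAt_eq (by simp)
      ((continuousOn_oddPowerSeries_sin hF).mono hsub) (hTi _)
      (fun y hy => hasDerivAt_oddPowerSeries_sin hF hy.1 hy.2)
      fun y hy => (hTi' _ y hy).congr_deriv
        (congrArg (· / Real.sin y) (hθ (Ioo_subset_Ico_self hy)).symm)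

end Substitution

lemma tsum_antitone_eq_oddPowerSeries_div (d : ℕ) {x : ℝ} (hx : x ≠ 0) :
    ∑' n : {n : Fin (d + 1) → ℕ // Antitone n},
      ((4 : ℝ) ^ n.1 0 * x ^ (2 * n.1 0) / ((2 * n.1 0).choose (n.1 0) : ℝ)) /
        ∏ j, (2 * (n.1 j : ℝ) + 1) ^ 2 = oddPowerSeries (centralCoeff (d + 1)) x / x := by
  have hg (k : ℕ) : 0 ≤ invCentralBinom k * x ^ (2 * k) := by
    rw [invCentralBinom, pow_mul]
    positivity
  calc _ = ∑' n : {n : Fin (d + 1) → ℕ // Antitone n},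
        invCentralBinom (n.1 0) * x ^ (2 * n.1 0) * ∏ j, oddSqWeight (n.1 j) := by
        refine tsum_congr fun n => ?_
        simp only [oddSqWeight, Finset.prod_inv_distrib, invCentralBinom,
          Nat.centralBinom_eq_two_mul_choose]
        ring
    _ = ∑' k, invCentralBinom k * x ^ (2 * k) * nestedSum oddSqWeight (d + 1) k :=
        tsum_antitone_eq_tsum_nestedSum d hg oddSqWeight_nonneg
    _ = oddPowerSeries (centralCoeff (d + 1)) x / x := by
        rw [oddPowerSeries, ← tsum_div_const]
        refine tsum_congr fun k => ?_
        rw [centralCoeff, pow_succ]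
        field_simp

/-- Proposition `pro-gtIds` (second identity): for `d ≥ 1` and `0 < y < π/2`,
the iterated sum over `n₁ ≥ ⋯ ≥ n_d ≥ 0` of
`4^{n₁} (sin y)^{2n₁} / (binom(2n₁,n₁) (2n₁+1)²⋯(2n_d+1)²)`
equals `(2/sin y) · Im Li_{2d}(i tan(y/2))`. -/
theorem stmt1 (d : ℕ) (hd : 1 ≤ d) (y : ℝ) (hy0 : 0 < y) (hy : y < π / 2) :
    (∑' n : {n : Fin d → ℕ // Antitone n},
      ((4 : ℝ) ^ (n.1 ⟨0, hd⟩) * Real.sin y ^ (2 * n.1 ⟨0, hd⟩) /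
        (Nat.choose (2 * n.1 ⟨0, hd⟩) (n.1 ⟨0, hd⟩) : ℝ)) /
      ∏ j : Fin d, (2 * (n.1 j : ℝ) + 1) ^ 2) =
    (2 / Real.sin y) *
      (∑' n : ℕ, (Complex.I * (Real.tan (y / 2) : ℂ)) ^ (n + 1) / ((n : ℂ) + 1) ^ (2 * d)).im := by
  obtain ⟨d, rfl⟩ := Nat.exists_eq_succ_of_ne_zero (Nat.one_le_iff_ne_zero.1 hd)
  have hsin : 0 < Real.sin y := Real.sin_pos_of_pos_of_lt_pi hy0 (by linarith)
  have htan : |Real.tan (y / 2)| < 1 := abs_tan_half_lt_one (by rwa [abs_of_pos hy0])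
  have hseries : oddPowerSeries (centralCoeff (d + 1)) (Real.sin y) =
      2 * oddPowerSeries (invTanCoeff (2 * (d + 1))) (Real.tan (y / 2)) :=
    eqOn_oddPowerSeries_sin_tan_half (d + 1) ⟨hy0.le, hy⟩
  rw [im_tsum_I_mul_pow_div htan, div_mul_eq_mul_div, ← hseries]
  exact tsum_antitone_eq_oddPowerSeries_div d hsin.ne'
end

section
/- For every integer d ≥ 1, the iterated sum over integers n₁ ≥ n₂ ≥ ⋯ ≥ n_d ≥ 0 of 4^{n₁} / (binom(2n₁, n₁) · (2n₁+1)²(2n₂+1)²⋯(2n_d+1)²) equals 2 β(2d), where β(s) = ∑_{k=0}^∞ (−1)^k/(2k+1)^s is the Dirichlet beta function. -/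
open Real

open Filter Finset Polynomial Topology

/-! The inner sum over `n₁ ≥ n₂ ≥ ⋯ ≥ n_d` is the complete homogeneous symmetric polynomial of
degree `d - 1` in the numbers `1 / (2m + 1)²`, `m ≤ n₁`. Its partial fraction expansion is
`∑ k ≤ n₁, b n₁ k / (2k + 1) ^ (2 (d - 1))`, where `b n k` is the value at `0` of the `k`-th
Lagrange basis polynomial with nodes `(2m + 1)²`, `m ≤ n`. After multiplication by
`4 ^ n / (binom(2n, n) (2n + 1)²)`, the coefficient `b n k` becomes
`(-1) ^ k (p n k - p n (k + 1)) / (2k + 1)²`, where `p n k = binom(2n, n + k) / 4 ^ n` is the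
probability that a simple random walk of `2n` steps ends at `2k`. Summed over `n` first, the
differences `p n k - p n (k + 1)` give `2` for every `k`, and what remains is `2 β(2d)`. -/

section AntitoneTuples

variable {R : Type*} [CommSemiring R] {d n : ℕ}

open Classical in
/-- The weakly decreasing tuples `n ≥ x 0 ≥ ⋯ ≥ x (d - 1) ≥ 0` of natural numbers, which index the
iterated sums. -/
noncomputable def antitoneTuples (d n : ℕ) : Finset (Fin d → ℕ) :=
  {x ∈ Iic (Function.const _ n) | Antitone x}

/-- The iterated sum of `f (x 0) ⋯ f (x (d - 1))` over `n ≥ x 0 ≥ ⋯ ≥ x (d - 1) ≥ 0`, that is, the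
complete homogeneous symmetric polynomial of degree `d` in `f 0, …, f n`. -/
noncomputable def antitoneSum (f : ℕ → R) (d n : ℕ) : R :=
  ∑ x ∈ antitoneTuples d n, ∏ j, f (x j)

lemma mem_antitoneTuples {x : Fin d → ℕ} :
    x ∈ antitoneTuples d n ↔ (∀ i, x i ≤ n) ∧ Antitone x := by
  simp [antitoneTuples, Pi.le_def]

lemma antitone_iff_tail_mem_antitoneTuples {x : Fin (d + 1) → ℕ} :
    Antitone x ↔ Fin.tail x ∈ antitoneTuples d (x 0) := by
  simp [mem_antitoneTuples, Antitone, Fin.forall_fin_succ, Fin.tail]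

lemma mem_antitoneTuples_succ {x : Fin (d + 1) → ℕ} :
    x ∈ antitoneTuples (d + 1) n ↔ x 0 ≤ n ∧ Fin.tail x ∈ antitoneTuples d (x 0) := by
  rw [mem_antitoneTuples, ← antitone_iff_tail_mem_antitoneTuples, and_congr_left_iff]
  exact fun hx => ⟨fun h => h 0, fun h i => (hx (Fin.zero_le i)).trans h⟩

/-- A weakly decreasing tuple of positive length amounts to its first entry together with a weakly
decreasing tuple bounded by it; this turns the sum of the theorem into an iterated sum. -/
noncomputable def sigmaEquivAntitone (d : ℕ) :
    (Σ n : ℕ, antitoneTuples d n) ≃ {x : Fin (d + 1) → ℕ // Antitone x} where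
  toFun p := ⟨Fin.cons p.1 p.2.1, antitone_iff_tail_mem_antitoneTuples.2 p.2.2⟩
  invFun x := ⟨x.1 0, Fin.tail x.1, antitone_iff_tail_mem_antitoneTuples.1 x.2⟩
  left_inv _ := rfl
  right_inv x := Subtype.ext (Fin.cons_self_tail x.1)

lemma antitoneSum_zero_left (f : ℕ → R) (n : ℕ) : antitoneSum f 0 n = 1 := by
  have : antitoneTuples 0 n = univ := by
    exact eq_univ_of_forall fun x =>
      mem_antitoneTuples.2 ⟨fun i => i.elim0, Subsingleton.antitone x⟩
  simp [antitoneSum, this]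

lemma antitoneSum_succ_left (f : ℕ → R) (d n : ℕ) :
    antitoneSum f (d + 1) n = ∑ m ∈ range (n + 1), f m * antitoneSum f d m := by
  simp_rw [antitoneSum, mul_sum, sum_sigma']
  refine sum_nbij' (fun x => ⟨x 0, Fin.tail x⟩) (fun p => Fin.cons p.1 p.2) ?_ ?_ ?_ ?_ ?_
  · simp [mem_antitoneTuples_succ]
  · simp [mem_antitoneTuples_succ]
  · simp
  · simp
  · intro x _
    rw [Fin.prod_univ_succ]
    rfl

lemma antitoneSum_zero_right (f : ℕ → R) (d : ℕ) : antitoneSum f d 0 = f 0 ^ d := by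
  induction d with
  | zero => simp [antitoneSum_zero_left]
  | succ d ih => simp [antitoneSum_succ_left, ih, pow_succ']

lemma antitoneSum_succ_succ (f : ℕ → R) (d n : ℕ) :
    antitoneSum f (d + 1) (n + 1) =
      antitoneSum f (d + 1) n + f (n + 1) * antitoneSum f d (n + 1) := by
  rw [antitoneSum_succ_left, sum_range_succ, ← antitoneSum_succ_left]

theorem hasSum_antitone_of_hasSum_antitoneSum {f g : ℕ → ℝ} {s : ℝ} (hf : ∀ n, 0 ≤ f n)
    (hg : ∀ n, 0 ≤ g n) (h : HasSum (fun n => g n * antitoneSum f d n) s) :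
    HasSum (fun x : {x : Fin (d + 1) → ℕ // Antitone x} => g (x.1 0) * ∏ j, f (x.1 (Fin.succ j)))
      s := by
  rw [← (sigmaEquivAntitone d).hasSum_iff]
  have inner (n : ℕ) :
      HasSum (fun y : antitoneTuples d n => g n * ∏ j, f (y.1 j)) (g n * antitoneSum f d n) := by
    rw [antitoneSum, mul_sum, ← sum_coe_sort]
    exact hasSum_fintype _
  have summable : Summable fun p : Σ n : ℕ, antitoneTuples d n => g p.1 * ∏ j, f (p.2.1 j) := by
    refine (summable_sigma_of_nonneg fun p => ?_).2 ⟨fun n => (inner n).summable, ?_⟩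
    · exact mul_nonneg (hg _) (prod_nonneg fun j _ => hf _)
    · simpa only [(inner _).tsum_eq] using h.summable
  exact HasSum.of_sigma inner h summable.hasSum.cauchySeq

end AntitoneTuples

section PartialFractions

variable {K : Type*} [Field K] {v : ℕ → K}

lemma eval_zero_basis_range_succ (hv : v.Injective) {k n : ℕ} (hk : k ≤ n) :
    eval 0 (Lagrange.basis (range (n + 2)) v k) * (v (n + 1) - v k) =
      eval 0 (Lagrange.basis (range (n + 1)) v k) * v (n + 1) := by
  have hne : v k - v (n + 1) ≠ 0 := sub_ne_zero.2 (hv.ne (by omega))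
  have herase : (range (n + 2)).erase k = insert (n + 1) ((range (n + 1)).erase k) := by
    ext m; simp only [mem_erase, mem_range, mem_insert]; omega
  rw [Lagrange.basis, herase, prod_insert (by simp), eval_mul, ← Lagrange.basis]
  simp only [Lagrange.basisDivisor, eval_mul, eval_C, eval_sub, eval_X]
  field_simp
  ring

theorem antitoneSum_inv_eq_sum_basis (hv : v.Injective) (hv₀ : ∀ m, v m ≠ 0) (d n : ℕ) :
    antitoneSum (fun m => (v m)⁻¹) d n =
      ∑ k ∈ range (n + 1), eval 0 (Lagrange.basis (range (n + 1)) v k) * (v k)⁻¹ ^ d := by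
  induction d generalizing n with
  | zero =>
    have hsum := Lagrange.sum_basis (s := range (n + 1)) hv.injOn nonempty_range_add_one
    simpa [antitoneSum_zero_left, eval_finsetSum] using (congrArg (eval 0) hsum).symm
  | succ d ihd =>
    induction n with
    | zero => simp [antitoneSum_zero_right]
    | succ n ihn =>
      rw [antitoneSum_succ_succ, ihn, ihd, sum_range_succ _ (n + 1), sum_range_succ _ (n + 1),
        mul_add, mul_sum, ← add_assoc, ← sum_add_distrib]
      congr 1
      · refine sum_congr rfl fun k hk => ?_
        have hrec := eval_zero_basis_range_succ hv (Nat.lt_succ_iff.1 (mem_range.1 hk))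
        have := hv₀ k
        have := hv₀ (n + 1)
        rw [pow_succ]
        field_simp
        linear_combination -hrec
      · ring

end PartialFractions

theorem hasSum_of_hasSum_columns {ι κ : Type*} {c : κ → ℝ} {q : κ → ι → ℝ} {r : ι → ℝ} {s : ℝ}
    (hc : Summable c) (hq : ∀ k n, 0 ≤ q k n) (hcol : ∀ k, HasSum (q k) s)
    (hrow : ∀ n, HasSum (fun k => c k * q k n) (r n)) : HasSum r (s * ∑' k, c k) := by
  have hcol' (k : κ) : HasSum (fun n => c k * q k n) (c k * s) := (hcol k).mul_left (c k)
  have hnorm (k : κ) : HasSum (fun n => ‖c k * q k n‖) (‖c k‖ * s) := by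
    simpa only [norm_mul, Real.norm_of_nonneg (hq _ _)] using (hcol k).mul_left ‖c k‖
  have hsummable : Summable fun p : κ × ι => c p.1 * q p.1 p.2 := by
    refine .of_norm ((summable_prod_of_nonneg fun p => norm_nonneg _).2
      ⟨fun k => (hnorm k).summable, ?_⟩)
    simpa only [(hnorm _).tsum_eq] using hc.norm.mul_right s
  have htotal : ∑' p : κ × ι, c p.1 * q p.1 p.2 = s * ∑' k, c k := by
    rw [← (hsummable.hasSum.prod_fiberwise hcol').tsum_eq, tsum_mul_right, mul_comm]
  rw [← htotal]
  exact ((Equiv.prodComm ι κ).hasSum_iff.2 hsummable.hasSum).prod_fiberwise hrow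

section WalkProb

/-- The probability `binom(2n, n + k) / 4 ^ n` that a simple random walk of `2n` steps ends
at `2k`. -/
noncomputable def walkProb (n k : ℕ) : ℝ := (2 * n).choose (n + k) / 4 ^ n

lemma walkProb_nonneg (n k : ℕ) : 0 ≤ walkProb n k := by
  unfold walkProb; positivity

lemma walkProb_zero_pos (n : ℕ) : 0 < walkProb n 0 :=
  div_pos (Nat.cast_pos.2 (Nat.choose_pos (by omega))) (by positivity)

lemma walkProb_self (n : ℕ) : walkProb n n = 1 / 4 ^ n := by
  simp [walkProb, ← two_mul]

lemma walkProb_eq_zero {n k : ℕ} (h : n < k) : walkProb n k = 0 := by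
  simp [walkProb, Nat.choose_eq_zero_of_lt (show 2 * n < n + k by omega)]

lemma walkProb_le_walkProb_zero (n k : ℕ) : walkProb n k ≤ walkProb n 0 := by
  unfold walkProb
  gcongr
  exact Nat.choose_le_centralBinom (n + k) n

lemma walkProb_succ_right (n k : ℕ) :
    (n + k + 1) * walkProb n (k + 1) = (n - k) * walkProb n k := by
  rcases le_or_gt k n with hk | hk
  · have h := congrArg (Nat.cast (R := ℝ)) (Nat.choose_succ_right_eq (2 * n) (n + k))
    rw [show 2 * n - (n + k) = n - k by omega] at h
    push_cast [Nat.cast_sub hk] at h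
    unfold walkProb
    rw [← add_assoc]
    linear_combination h / 4 ^ n
  · simp [walkProb_eq_zero hk, walkProb_eq_zero (hk.trans k.lt_succ_self)]

lemma walkProb_sub_walkProb_succ (n k : ℕ) :
    (n + k + 1) * (walkProb n k - walkProb n (k + 1)) = (2 * k + 1) * walkProb n k := by
  linear_combination -walkProb_succ_right n k

lemma walkProb_sub_walkProb_succ_nonneg (n k : ℕ) : 0 ≤ walkProb n k - walkProb n (k + 1) := by
  have h : 0 ≤ (n + k + 1) * (walkProb n k - walkProb n (k + 1)) := by
    rw [walkProb_sub_walkProb_succ]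
    exact mul_nonneg (by positivity) (walkProb_nonneg n k)
  exact nonneg_of_mul_nonneg_right h (by positivity)

lemma four_mul_walkProb_succ_succ (n k : ℕ) :
    4 * walkProb (n + 1) (k + 1) = walkProb n k + 2 * walkProb n (k + 1) + walkProb n (k + 2) := by
  have h : (2 * (n + 1)).choose (n + 1 + (k + 1)) =
      (2 * n).choose (n + k) + 2 * (2 * n).choose (n + (k + 1)) + (2 * n).choose (n + (k + 2)) := by
    rw [show 2 * (n + 1) = 2 * n + 1 + 1 by ring, show n + 1 + (k + 1) = n + k + 1 + 1 by ring]
    simp only [Nat.choose_succ_succ', ← add_assoc]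
    ring
  unfold walkProb
  rw [h, pow_succ]
  push_cast
  field_simp

lemma walkProb_succ_zero (n : ℕ) :
    2 * (n + 1) * walkProb (n + 1) 0 = (2 * n + 1) * walkProb n 0 := by
  have h := congrArg (Nat.cast (R := ℝ)) (Nat.succ_mul_centralBinom_succ n)
  simp only [Nat.centralBinom] at h
  push_cast at h
  unfold walkProb
  rw [pow_succ]
  field_simp
  linear_combination 2 * h

lemma two_mul_walkProb_succ_zero (n : ℕ) :
    2 * walkProb (n + 1) 0 = walkProb n 0 + walkProb n 1 := by
  have h := walkProb_succ_right n 0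
  simp only [Nat.cast_zero, add_zero, sub_zero, zero_add] at h
  have hn : (n : ℝ) + 1 ≠ 0 := by positivity
  apply mul_left_cancel₀ hn
  linear_combination walkProb_succ_zero n - h

lemma walkProb_zero_mul_factorial_sq (k : ℕ) :
    4 ^ k * k.factorial ^ 2 * walkProb k 0 = (2 * k).factorial := by
  have h := congrArg (Nat.cast (R := ℝ)) (Nat.add_choose_mul_factorial_mul_factorial k k)
  rw [← two_mul] at h
  push_cast at h
  unfold walkProb
  rw [add_zero]
  field_simp
  linear_combination h

lemma walkProb_succ_left (n k : ℕ) :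
    2 * (n + 1 - k) * (n + 1 + k) * walkProb (n + 1) k =
      (n + 1) * (2 * n + 1) * walkProb n k := by
  cases k with
  | zero =>
    push_cast
    linear_combination (n + 1 : ℝ) * walkProb_succ_zero n
  | succ k =>
    have h₁ := walkProb_succ_right n k
    have h₂ := walkProb_succ_right n (k + 1)
    have h₃ := four_mul_walkProb_succ_succ n k
    push_cast at h₁ h₂ ⊢
    linear_combination (n - k) * (n + 2 + k) / 2 * h₃ + (n - k) / 2 * h₂ - (n + k + 2) / 2 * h₁

/-- The right-hand side is twice the probability that the walk of `2N` steps ends outside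
`[-2k, 2k]`, which explains the limit `2`. -/
lemma sum_range_walkProb_sub (k N : ℕ) :
    ∑ n ∈ range N, (walkProb n k - walkProb n (k + 1)) =
      2 - 2 * walkProb N 0 - 4 * ∑ j ∈ range k, walkProb N (j + 1) := by
  induction N with
  | zero => simp [walkProb]
  | succ N ih =>
    have hstep : 4 * ∑ j ∈ range k, walkProb (N + 1) (j + 1) =
        4 * ∑ j ∈ range k, walkProb N (j + 1) +
          ((walkProb N 0 - walkProb N 1) - (walkProb N k - walkProb N (k + 1))) := by
      rw [← sum_range_sub' (fun j => walkProb N j - walkProb N (j + 1)), mul_sum, mul_sum,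
        ← sum_add_distrib]
      refine sum_congr rfl fun j _ => ?_
      linear_combination four_mul_walkProb_succ_succ N j
    rw [sum_range_succ, ih]
    linear_combination hstep + two_mul_walkProb_succ_zero N

lemma walkProb_zero_sq_mul_le_one (n : ℕ) : walkProb n 0 ^ 2 * (2 * n + 1) ≤ 1 := by
  induction n with
  | zero => simp [walkProb]
  | succ n ih =>
    have h : walkProb (n + 1) 0 = walkProb n 0 * ((2 * n + 1) / (2 * n + 2)) := by
      field_simp
      linear_combination walkProb_succ_zero n
    have hratio : ((2 * n + 1) / (2 * n + 2) : ℝ) ^ 2 * (2 * (n + 1) + 1) ≤ 2 * n + 1 := by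
      rw [div_pow, div_mul_eq_mul_div, div_le_iff₀ (by positivity)]
      linear_combination 2 * (Nat.cast_nonneg n : (0 : ℝ) ≤ n)
    calc walkProb (n + 1) 0 ^ 2 * (2 * (n + 1 : ℕ) + 1)
        = walkProb n 0 ^ 2 * (((2 * n + 1) / (2 * n + 2)) ^ 2 * (2 * (n + 1) + 1)) := by
          rw [h]; push_cast; ring
      _ ≤ walkProb n 0 ^ 2 * (2 * n + 1) := by gcongr
      _ ≤ 1 := ih

lemma tendsto_walkProb_atTop (k : ℕ) : Tendsto (fun n => walkProb n k) atTop (𝓝 0) := by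
  have hsq : Tendsto (fun n : ℕ => walkProb n 0 ^ 2) atTop (𝓝 0) := by
    refine squeeze_zero (fun n => sq_nonneg _) (fun n => ?_)
      tendsto_one_div_add_atTop_nhds_zero_nat
    rw [le_div_iff₀ (by positivity)]
    refine le_trans ?_ (walkProb_zero_sq_mul_le_one n)
    gcongr
    linarith [(Nat.cast_nonneg n : (0 : ℝ) ≤ n)]
  have hzero : Tendsto (fun n => walkProb n 0) atTop (𝓝 0) := by
    simpa [Real.sqrt_sq (walkProb_nonneg _ _)] using hsq.sqrt
  exact squeeze_zero (walkProb_nonneg · k) (walkProb_le_walkProb_zero · k) hzero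

theorem hasSum_walkProb_sub (k : ℕ) : HasSum (fun n => walkProb n k - walkProb n (k + 1)) 2 := by
  rw [hasSum_iff_tendsto_nat_of_nonneg fun n => walkProb_sub_walkProb_succ_nonneg n k]
  simp only [sum_range_walkProb_sub]
  have h := tendsto_finsetSum (range k) fun j _ => tendsto_walkProb_atTop (j + 1)
  simpa using ((tendsto_walkProb_atTop 0).const_mul 2).const_sub 2 |>.sub (h.const_mul 4)

end WalkProb

section OddSquares

/-- The nodes `(2m + 1)²` of the partial fraction expansion. -/
def oddSq (m : ℕ) : ℝ := (2 * m + 1) ^ 2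

lemma oddSq_pos (m : ℕ) : 0 < oddSq m := by
  unfold oddSq; positivity

lemma oddSq_sub_oddSq (m k : ℕ) : oddSq m - oddSq k = 4 * ((m - k) * (m + k + 1)) := by
  unfold oddSq; ring

lemma oddSq_injective : oddSq.Injective := by
  intro m k h
  have h' := (pow_left_inj₀ (by positivity) (by positivity) two_ne_zero).1 h
  exact_mod_cast (by linarith : (m : ℝ) = k)

lemma prod_range_sub_mul_add (k : ℕ) :
    ∏ m ∈ range k, (((k : ℝ) - m) * (k + m + 1)) = (2 * k).factorial := by
  have h : k.descFactorial k * (k + 1).ascFactorial k = (2 * k).factorial := by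
    rw [Nat.descFactorial_self, Nat.factorial_mul_ascFactorial, two_mul]
  rw [← h, Nat.descFactorial_eq_prod_range, Nat.ascFactorial_eq_prod_range, ← prod_mul_distrib]
  push_cast
  refine prod_congr rfl fun m hm => ?_
  rw [Nat.cast_sub (mem_range.1 hm).le]
  ring

lemma prod_range_two_mul_add_one (k : ℕ) :
    ∏ m ∈ range k, (2 * (m : ℝ) + 1) = 2 ^ k * k.factorial * walkProb k 0 := by
  induction k with
  | zero => simp [walkProb]
  | succ k ih =>
    rw [prod_range_succ, ih, Nat.factorial_succ, pow_succ]
    push_cast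
    linear_combination -(2 ^ k * k.factorial : ℝ) * walkProb_succ_zero k

lemma eval_zero_basis_oddSq_self (k : ℕ) :
    eval 0 (Lagrange.basis (range (k + 1)) oddSq k) = (-1) ^ k * walkProb k 0 / 4 ^ k := by
  have herase : (range (k + 1)).erase k = range k := by simp [range_add_one]
  have hfactor (m : ℕ) : eval 0 (Lagrange.basisDivisor (oddSq k) (oddSq m)) =
      -1 * (2 * m + 1) ^ 2 / (4 * ((k - m) * (k + m + 1))) := by
    rw [← oddSq_sub_oddSq, ← oddSq]
    simp only [Lagrange.basisDivisor, eval_mul, eval_C, eval_sub, eval_X]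
    ring
  have hp := (walkProb_zero_pos k).ne'
  simp only [Lagrange.basis, herase, eval_prod, hfactor, prod_div_distrib, prod_mul_distrib,
    prod_pow, prod_const, card_range, prod_range_two_mul_add_one]
  rw [← prod_mul_distrib, prod_range_sub_mul_add, ← walkProb_zero_mul_factorial_sq]
  field_simp
  rw [← pow_mul, mul_comm k, pow_mul]
  norm_num

lemma eval_zero_basis_oddSq {k n : ℕ} (hk : k ≤ n) :
    eval 0 (Lagrange.basis (range (n + 1)) oddSq k) =
      (-1) ^ k * (2 * n + 1) ^ 2 * walkProb n 0 * walkProb n k / ((2 * k + 1) * (n + k + 1)) := by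
  induction n, hk using Nat.le_induction with
  | base =>
    rw [eval_zero_basis_oddSq_self, walkProb_self]
    field_simp
    ring
  | succ n hk ih =>
    have hrec := eval_zero_basis_range_succ oddSq_injective hk
    have hne : (n : ℝ) + 1 - k ≠ 0 := by
      linarith [(Nat.cast_le.2 hk : (k : ℝ) ≤ n)]
    have hzero : walkProb (n + 1) 0 = (2 * n + 1) * walkProb n 0 / (2 * (n + 1)) := by
      rw [eq_div_iff (by positivity)]
      linear_combination walkProb_succ_zero n
    have hleft : walkProb (n + 1) k =
        (n + 1) * (2 * n + 1) * walkProb n k / (2 * (n + 1 - k) * (n + 1 + k)) := by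
      rw [eq_div_iff (by positivity)]
      linear_combination walkProb_succ_left n k
    apply mul_right_cancel₀ (sub_ne_zero.2 (oddSq_injective.ne (by omega : n + 1 ≠ k)))
    rw [hrec, ih, hzero, hleft, oddSq_sub_oddSq, oddSq]
    push_cast
    field_simp
    ring

lemma inv_mul_eval_zero_basis_oddSq {k n : ℕ} (hk : k ≤ n) :
    (walkProb n 0 * oddSq n)⁻¹ * eval 0 (Lagrange.basis (range (n + 1)) oddSq k) =
      (-1) ^ k * (walkProb n k - walkProb n (k + 1)) / oddSq k := by
  have hp := (walkProb_zero_pos n).ne'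
  have h := walkProb_sub_walkProb_succ n k
  rw [eval_zero_basis_oddSq hk]
  unfold oddSq
  field_simp
  linear_combination -h

end OddSquares

lemma summable_neg_one_pow_div_odd_pow {s : ℕ} (hs : 2 ≤ s) :
    Summable fun k : ℕ => (-1 : ℝ) ^ k / (2 * k + 1) ^ s := by
  have h : Summable fun k : ℕ => 1 / ((k + 1 : ℕ) : ℝ) ^ s :=
    (summable_nat_add_iff 1).2 (Real.summable_one_div_nat_pow.2 hs)
  refine .of_norm_bounded h fun k => ?_
  rw [norm_div, norm_pow, norm_neg, norm_one, one_pow, Real.norm_of_nonneg (by positivity)]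
  push_cast
  gcongr
  linarith [(Nat.cast_nonneg k : (0 : ℝ) ≤ k)]

theorem hasSum_antitoneSum_oddSq (d : ℕ) :
    HasSum (fun n => (walkProb n 0 * oddSq n)⁻¹ * antitoneSum (fun m => (oddSq m)⁻¹) d n)
      (2 * ∑' k : ℕ, (-1 : ℝ) ^ k / (2 * (k : ℝ) + 1) ^ (2 * (d + 1))) := by
  refine hasSum_of_hasSum_columns (summable_neg_one_pow_div_odd_pow (by omega))
    (fun k n => walkProb_sub_walkProb_succ_nonneg n k) hasSum_walkProb_sub fun n => ?_
  rw [antitoneSum_inv_eq_sum_basis oddSq_injective fun m => (oddSq_pos m).ne', mul_sum]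
  have hterm : ∀ k ∈ range (n + 1),
      (walkProb n 0 * oddSq n)⁻¹ *
        (eval 0 (Lagrange.basis (range (n + 1)) oddSq k) * (oddSq k)⁻¹ ^ d) =
      (-1) ^ k / (2 * k + 1) ^ (2 * (d + 1)) * (walkProb n k - walkProb n (k + 1)) := by
    intro k hk
    rw [← mul_assoc, inv_mul_eval_zero_basis_oddSq (Nat.lt_succ_iff.1 (mem_range.1 hk)), pow_mul,
      ← oddSq, pow_succ, inv_pow]
    field_simp
  rw [sum_congr rfl hterm]
  refine hasSum_sum_of_ne_finset_zero fun k hk => ?_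
  have hk : n < k := by simpa using hk
  rw [walkProb_eq_zero hk, walkProb_eq_zero (hk.trans k.lt_succ_self), sub_zero, mul_zero]

/-- For `d ≥ 1`, the iterated sum over `n₁ ≥ ⋯ ≥ n_d ≥ 0` of
`4^{n₁} / (binom(2n₁,n₁) (2n₁+1)²⋯(2n_d+1)²)` equals `2β(2d)`,
where `β` is the Dirichlet beta function. -/
theorem stmt3 (d : ℕ) (hd : 1 ≤ d) :
    (∑' n : {n : Fin d → ℕ // Antitone n},
      ((4 : ℝ) ^ (n.1 ⟨0, hd⟩) /
        ((Nat.choose (2 * n.1 ⟨0, hd⟩) (n.1 ⟨0, hd⟩) : ℝ) *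
          ∏ j : Fin d, (2 * (n.1 j : ℝ) + 1) ^ 2))) =
    2 * ∑' k : ℕ, (-1 : ℝ) ^ k / (2 * (k : ℝ) + 1) ^ (2 * d) := by
  obtain ⟨e, rfl⟩ : ∃ e, d = e + 1 := Nat.exists_eq_add_of_le' hd
  have hsum := hasSum_antitone_of_hasSum_antitoneSum (fun m => (inv_pos.2 (oddSq_pos m)).le)
    (fun n => (inv_pos.2 (mul_pos (walkProb_zero_pos n) (oddSq_pos n))).le)
    (hasSum_antitoneSum_oddSq e)
  rw [← hsum.tsum_eq]
  refine tsum_congr fun x => ?_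
  simp only [Fin.zero_eta, Fin.prod_univ_succ, walkProb, oddSq, prod_inv_distrib, add_zero]
  field_simp
end
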